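/- Consider the 1-D heat equation ∂_t u = ε_n ∂²_{xx} u with viscosity ε_n = 2^{-2n} and initial data u₀(x) = 2^{-ns} φ(x) cos((17/12)2^n x), where φ is a Schwartz bump whose Fourier transform is supported in {|ξ| ≤ 1/2} and equal to 1 near 0, and s > 3/2 (or any fixed s ∈ ℝ with p ∈ [1,∞]). Then the solution u^{ε_n}(t) = e^{ε_n t ∂²_{xx}} u₀ satisfies: at times t = δ 2^{... } comparable to a fixed small δ > 0, 2^{ns}‖Δ_n(u^{ε_n}(t) − u₀)‖_{L^p} ≥ c₁ t − C₁ t², with c₁, C₁ > 0 independent of n; hence u^{ε_n}(t) − u₀ does not converge to 0 in B^s_{p,∞}(ℝ) as n → ∞ for t in a fixed small interval bounded away from values where c₁t − C₁t² ≤ 0. -/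

import Mathlib

open MeasureTheory Filter

/-- Fourier transform on `ℝ` with the convention `(Fu)(ξ) = ∫ e^{-i x ξ} u(x) dx`. -/
noncomputable def fourierT1 (u : ℝ → ℂ) (ξ : ℝ) : ℂ :=
  ∫ x : ℝ, Complex.exp (-Complex.I * (x * ξ)) * u x

/-- Inverse Fourier transform on `ℝ`: `(F⁻¹u)(x) = (2π)⁻¹ ∫ e^{i x ξ} u(ξ) dξ`. -/
noncomputable def invFourierT1 (u : ℝ → ℂ) (x : ℝ) : ℂ :=
  ((2 * Real.pi : ℝ) : ℂ)⁻¹ * ∫ ξ : ℝ, Complex.exp (Complex.I * (x * ξ)) * u ξ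

/-- The Littlewood–Paley cutoff `φ(ξ) = ϑ(ξ/2) − ϑ(ξ)`. -/
noncomputable def lpCutoff1 (ϑ : ℝ → ℝ) (ξ : ℝ) : ℝ := ϑ (ξ / 2) - ϑ ξ

/-- The nonhomogeneous Littlewood–Paley block `Δ_n` on `ℝ`, for `n ≥ -1`. -/
noncomputable def lpBlock1 (ϑ : ℝ → ℝ) (n : ℤ) (g : ℝ → ℂ) (x : ℝ) : ℂ :=
  invFourierT1 (fun ξ =>
    ((if n = -1 then ϑ ξ else lpCutoff1 ϑ ((2:ℝ)^(-n) * ξ)) : ℝ) * fourierT1 g ξ) x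

/-- The 1-D heat semigroup `e^{t∂²ₓₓ}`. -/
noncomputable def heatSemigroup1 (t : ℝ) (f : ℝ → ℂ) (x : ℝ) : ℂ :=
  if t ≤ 0 then f x
  else ∫ y : ℝ, (((4 * Real.pi * t) ^ (-(1:ℝ)/2) * Real.exp (-(x - y)^2 / (4*t)) : ℝ) : ℂ) * f y

/-!
On the frequency support of the data `u₀`, where `|ξ| ≈ κ 2ⁿ`, the symbol of `e^{ε_n t ∂²ₓₓ} - 1`
is `exp (-t (2⁻ⁿ ξ)²) - 1 = -κ² t + O(2⁻ⁿ t + t²)`, and `Δ_n` acts as the identity there. Fourier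
inversion turns this into a uniform bound for `Δ_n(u(t) - u₀) + κ² t u₀`, so it remains to bound
`u₀` from below in `L^p`. On a ball of measure one `L¹ ≤ L^p`, and there
`‖φ(x) cos(κ 2ⁿ x)‖ ≥ ‖φ(x)‖ cos²(κ 2ⁿ x)`, whose integral tends to `½ ∫ ‖φ‖ > 0` by the
Riemann–Lebesgue lemma.
-/

open Set ProbabilityTheory
open scoped FourierTransform Convolution Topology

section Transform

variable {u g : ℝ → ℂ}

lemma fourierT1_eq_fourier (u : ℝ → ℂ) (ξ : ℝ) : fourierT1 u ξ = 𝓕 u (ξ / (2 * Real.pi)) := by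
  rw [fourierT1, Real.fourier_real_eq_integral_exp_smul]
  refine integral_congr_ae (.of_forall fun x => ?_)
  have hphase : -2 * Real.pi * x * (ξ / (2 * Real.pi)) = -(x * ξ) := by
    field_simp
  simp only [hphase, smul_eq_mul]
  congr 2
  push_cast
  ring

lemma invFourierT1_eq_fourierT1_neg (g : ℝ → ℂ) (x : ℝ) :
    invFourierT1 g x = ((2 * Real.pi : ℝ) : ℂ)⁻¹ * fourierT1 g (-x) := by
  rw [invFourierT1, fourierT1]
  congr! 5 with ξ
  push_cast
  ring

lemma invFourierT1_eq_fourierInv (g : ℝ → ℂ) (x : ℝ) :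
    invFourierT1 g x = 𝓕⁻ (fun w : ℝ => g (2 * Real.pi * w)) x := by
  have hscale := Measure.integral_comp_mul_left
    (fun ξ : ℝ => Complex.exp (Complex.I * (x * ξ)) * g ξ) (2 * Real.pi)
  rw [abs_of_pos (by positivity), Complex.real_smul, Complex.ofReal_inv] at hscale
  rw [invFourierT1, ← hscale, Real.fourierInv_eq']
  refine integral_congr_ae (.of_forall fun w => ?_)
  simp only [RCLike.inner_apply, conj_trivial, smul_eq_mul]
  congr 2
  push_cast
  ring

lemma integrable_exp_mul (hu : Integrable u) (ξ : ℝ) :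
    Integrable fun x : ℝ => Complex.exp (-Complex.I * (x * ξ)) * u x := by
  refine hu.bdd_mul (c := 1) (by fun_prop) (.of_forall fun x => le_of_eq ?_)
  rw [show -Complex.I * ((x : ℂ) * ξ) = ((-(x * ξ) : ℝ) : ℂ) * Complex.I by push_cast; ring,
    Complex.norm_exp_ofReal_mul_I]

lemma fourierT1_const_mul (c : ℂ) (u : ℝ → ℂ) (ξ : ℝ) :
    fourierT1 (fun x => c * u x) ξ = c * fourierT1 u ξ := by
  simp only [fourierT1, ← integral_const_mul, mul_left_comm c]

lemma fourierT1_sub {v : ℝ → ℂ} (hu : Integrable u) (hv : Integrable v) (ξ : ℝ) :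
    fourierT1 (fun x => u x - v x) ξ = fourierT1 u ξ - fourierT1 v ξ := by
  simp only [fourierT1, mul_sub]
  exact integral_sub (integrable_exp_mul hu ξ) (integrable_exp_mul hv ξ)

lemma continuous_fourierT1 (hu : Integrable u) : Continuous (fourierT1 u) := by
  have hcont : Continuous (𝓕 u) :=
    VectorFourier.fourierIntegral_continuous Real.continuous_fourierChar
      (innerSL ℝ (E := ℝ)).continuous₂ hu
  rw [funext (fourierT1_eq_fourier u)]
  exact hcont.comp (continuous_id.div_const _)

lemma norm_fourierT1_le (u : ℝ → ℂ) (ξ : ℝ) : ‖fourierT1 u ξ‖ ≤ ∫ x, ‖u x‖ := by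
  rw [fourierT1_eq_fourier]
  exact VectorFourier.norm_fourierIntegral_le_integral_norm ..

lemma tendsto_fourierT1_atTop (u : ℝ → ℂ) : Tendsto (fourierT1 u) atTop (𝓝 0) := by
  rw [funext (fourierT1_eq_fourier u)]
  exact ((Real.zero_at_infty_fourier u).mono_left atTop_le_cocompact).comp
    (tendsto_id.atTop_div_const (by positivity))

lemma invFourierT1_const_mul (c : ℂ) (g : ℝ → ℂ) (x : ℝ) :
    invFourierT1 (fun ξ => c * g ξ) x = c * invFourierT1 g x := by
  simp only [invFourierT1_eq_fourierT1_neg, fourierT1_const_mul, mul_left_comm c]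

lemma invFourierT1_sub {h : ℝ → ℂ} (hg : Integrable g) (hh : Integrable h) (x : ℝ) :
    invFourierT1 (fun ξ => g ξ - h ξ) x = invFourierT1 g x - invFourierT1 h x := by
  simp only [invFourierT1_eq_fourierT1_neg, fourierT1_sub hg hh, mul_sub]

lemma continuous_invFourierT1 (hg : Integrable g) : Continuous (invFourierT1 g) := by
  rw [funext (invFourierT1_eq_fourierT1_neg g)]
  exact continuous_const.mul ((continuous_fourierT1 hg).comp continuous_neg)

lemma norm_invFourierT1_le (g : ℝ → ℂ) (x : ℝ) :
    ‖invFourierT1 g x‖ ≤ (2 * Real.pi)⁻¹ * ∫ ξ, ‖g ξ‖ := by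
  rw [invFourierT1_eq_fourierT1_neg, norm_mul, norm_inv, Complex.norm_real,
    Real.norm_of_nonneg (by positivity)]
  gcongr
  exact norm_fourierT1_le g (-x)

lemma invFourierT1_fourierT1 (hcont : Continuous u) (hu : Integrable u)
    (hû : Integrable (fourierT1 u)) (x : ℝ) : invFourierT1 (fourierT1 u) x = u x := by
  have hscale : (fun w : ℝ => fourierT1 u (2 * Real.pi * w)) = 𝓕 u := by
    funext w
    rw [fourierT1_eq_fourier, mul_div_cancel_left₀ w (by positivity)]
  have hint : Integrable (𝓕 u) := hscale ▸ hû.comp_mul_left' (by positivity)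
  rw [invFourierT1_eq_fourierInv, hscale, hcont.fourierInv_fourier_eq hu hint]

/-- The norm of `u` in the Wiener algebra `𝓕L¹`, normalised so as to dominate the sup norm. -/
noncomputable def wienerNorm (u : ℝ → ℂ) : ℝ := (2 * Real.pi)⁻¹ * ∫ ξ, ‖fourierT1 u ξ‖

lemma norm_le_wienerNorm (hcont : Continuous u) (hu : Integrable u)
    (hû : Integrable (fourierT1 u)) (x : ℝ) : ‖u x‖ ≤ wienerNorm u := by
  rw [← invFourierT1_fourierT1 hcont hu hû x]
  exact norm_invFourierT1_le _ x

lemma norm_invFourierT1_mul_sub_le {m : ℝ → ℂ} {c : ℂ} {δ : ℝ} (hcont : Continuous u)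
    (hu : Integrable u) (hû : Integrable (fourierT1 u))
    (hm : Integrable fun ξ => m ξ * fourierT1 u ξ)
    (hδ : ∀ ξ, fourierT1 u ξ ≠ 0 → ‖m ξ - c‖ ≤ δ) (x : ℝ) :
    ‖invFourierT1 (fun ξ => m ξ * fourierT1 u ξ) x - c * u x‖ ≤ δ * wienerNorm u := by
  have hbound : ∀ ξ, ‖m ξ * fourierT1 u ξ - c * fourierT1 u ξ‖ ≤ δ * ‖fourierT1 u ξ‖ := by
    intro ξ
    by_cases hξ : fourierT1 u ξ = 0
    · simp [hξ]
    · rw [← sub_mul, norm_mul]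
      gcongr
      exact hδ ξ hξ
  rw [← invFourierT1_fourierT1 hcont hu hû x, ← invFourierT1_const_mul,
    ← invFourierT1_sub hm (hû.const_mul c)]
  calc _ ≤ (2 * Real.pi)⁻¹ * ∫ ξ, ‖m ξ * fourierT1 u ξ - c * fourierT1 u ξ‖ :=
        norm_invFourierT1_le _ x
    _ ≤ (2 * Real.pi)⁻¹ * ∫ ξ, δ * ‖fourierT1 u ξ‖ := by
        refine mul_le_mul_of_nonneg_left ?_ (by positivity)
        exact integral_mono (hm.sub (hû.const_mul c)).norm (hû.norm.const_mul δ) hbound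
    _ = δ * wienerNorm u := by rw [integral_const_mul, wienerNorm]; ring

end Transform

section HeatSemigroup

variable {f : ℝ → ℂ} {τ : ℝ}

lemma heatSemigroup1_eq_convolution (hτ : 0 < τ) (f : ℝ → ℂ) :
    heatSemigroup1 τ f =
      (fun x => (gaussianPDFReal 0 (2 * τ).toNNReal x : ℂ)) ⋆[ContinuousLinearMap.mul ℂ ℂ] f := by
  funext x
  rw [convolution_mul_swap, heatSemigroup1, if_neg hτ.not_ge]
  have hroot : (4 * Real.pi * τ) ^ (-(1 : ℝ) / 2) = (√(2 * Real.pi * (2 * τ)))⁻¹ := by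
    rw [neg_div, Real.rpow_neg (by positivity), Real.sqrt_eq_rpow]
    ring_nf
  simp only [gaussianPDFReal, Real.coe_toNNReal (2 * τ) (by positivity), hroot, sub_zero]
  refine integral_congr_ae (.of_forall fun y => ?_)
  ring_nf

lemma integrable_heatSemigroup1 (hτ : 0 < τ) (hf : Integrable f) :
    Integrable (heatSemigroup1 τ f) := by
  rw [heatSemigroup1_eq_convolution hτ]
  exact (integrable_gaussianPDFReal _ _).ofReal.integrable_convolution _ hf

lemma fourierT1_gaussianPDFReal (hτ : 0 < τ) (ξ : ℝ) :
    fourierT1 (fun x => (gaussianPDFReal 0 (2 * τ).toNNReal x : ℂ)) ξ =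
      (Real.exp (-(τ * ξ ^ 2)) : ℂ) := by
  have hvar : (2 * τ).toNNReal ≠ 0 := by simpa using hτ
  have hchar := charFun_gaussianReal (μ := 0) (v := (2 * τ).toNNReal) (-ξ)
  rw [charFun_apply_real, integral_gaussianReal_eq_integral_smul hvar] at hchar
  calc fourierT1 (fun x => (gaussianPDFReal 0 (2 * τ).toNNReal x : ℂ)) ξ
      = ∫ x, gaussianPDFReal 0 (2 * τ).toNNReal x •
          Complex.exp (((-ξ : ℝ) : ℂ) * x * Complex.I) := by
        refine integral_congr_ae (.of_forall fun x => ?_)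
        simp only [Complex.real_smul, mul_comm (gaussianPDFReal _ _ x : ℂ)]
        congr 2
        push_cast
        ring
    _ = (Real.exp (-(τ * ξ ^ 2)) : ℂ) := by
        rw [hchar, Real.coe_toNNReal (2 * τ) (by positivity)]
        push_cast
        ring_nf

lemma fourierT1_heatSemigroup1 (hτ : 0 < τ) (hf : Integrable f) (ξ : ℝ) :
    fourierT1 (heatSemigroup1 τ f) ξ = (Real.exp (-(τ * ξ ^ 2)) : ℂ) * fourierT1 f ξ := by
  have hkernel : Integrable fun x => (gaussianPDFReal 0 (2 * τ).toNNReal x : ℂ) :=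
    (integrable_gaussianPDFReal _ _).ofReal
  rw [heatSemigroup1_eq_convolution hτ, fourierT1_eq_fourier,
    Real.fourier_mul_convolution_eq hkernel hf, ← fourierT1_eq_fourier,
    ← fourierT1_eq_fourier, fourierT1_gaussianPDFReal hτ]

lemma heatSemigroup1_const_mul (τ : ℝ) (c : ℂ) (f : ℝ → ℂ) (x : ℝ) :
    heatSemigroup1 τ (fun y => c * f y) x = c * heatSemigroup1 τ f x := by
  simp only [heatSemigroup1, ← integral_const_mul, mul_left_comm c, mul_ite]

lemma integrable_exp_neg_sub_one_mul (hτ : 0 ≤ τ) (hf : Integrable f) :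
    Integrable fun ξ => ((Real.exp (-(τ * ξ ^ 2)) - 1 : ℝ) : ℂ) * f ξ := by
  refine hf.bdd_mul (c := 1) (by fun_prop) (.of_forall fun ξ => ?_)
  have hpos := Real.exp_pos (-(τ * ξ ^ 2))
  have hle : Real.exp (-(τ * ξ ^ 2)) ≤ 1 := Real.exp_le_one_iff.2 (by nlinarith [sq_nonneg ξ])
  rw [Complex.norm_real, Real.norm_eq_abs, abs_le]
  constructor <;> linarith

end HeatSemigroup

section Symbol

lemma abs_exp_neg_sub_one_add_le {y : ℝ} (hy : 0 ≤ y) :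
    |Real.exp (-y) - 1 + y| ≤ y ^ 2 / 2 := by
  have hlower := Real.add_one_le_exp (-y)
  have hupper : Real.exp (-y) ≤ 1 - y + y ^ 2 / 2 := by
    rw [Real.exp_neg, inv_le_iff_one_le_mul₀ (Real.exp_pos y)]
    calc (1 : ℝ) ≤ (1 - y + y ^ 2 / 2) * (1 + y + y ^ 2 / 2) := by nlinarith [sq_nonneg (y ^ 2)]
      _ ≤ (1 - y + y ^ 2 / 2) * Real.exp y := by
          gcongr
          · nlinarith [sq_nonneg (y - 1)]
          · exact Real.quadratic_le_exp_of_nonneg hy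
  rw [abs_of_nonneg (by linarith)]
  linarith

lemma abs_exp_neg_mul_sq_sub_one_add_le {t η κ r : ℝ} (ht : 0 ≤ t) (hη : |η| ≤ 2)
    (hκ : |κ| ≤ 2) (hr : |(|η| - |κ|)| ≤ r) :
    |Real.exp (-(t * η ^ 2)) - 1 + t * κ ^ 2| ≤ 4 * t * r + 8 * t ^ 2 := by
  have htaylor : |Real.exp (-(t * η ^ 2)) - 1 + t * η ^ 2| ≤ 8 * t ^ 2 := by
    have hη2 : η ^ 2 ≤ 4 := by nlinarith [sq_abs η, abs_nonneg η]
    calc _ ≤ (t * η ^ 2) ^ 2 / 2 := abs_exp_neg_sub_one_add_le (by positivity)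
      _ ≤ (t * 4) ^ 2 / 2 := by gcongr
      _ = 8 * t ^ 2 := by ring
  have hfreq : |t * (κ ^ 2 - η ^ 2)| ≤ 4 * t * r := by
    have hfactor : κ ^ 2 - η ^ 2 = -((|η| - |κ|) * (|η| + |κ|)) := by
      linear_combination -(sq_abs κ) + sq_abs η
    rw [hfactor, abs_mul, abs_neg, abs_mul, abs_of_nonneg ht,
      abs_of_nonneg (add_nonneg (abs_nonneg η) (abs_nonneg κ))]
    calc t * (|(|η| - |κ|)| * (|η| + |κ|)) ≤ t * (r * (2 + 2)) := by
          gcongr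
          exact (abs_nonneg _).trans hr
      _ = 4 * t * r := by ring
  calc _ = |(Real.exp (-(t * η ^ 2)) - 1 + t * η ^ 2) + t * (κ ^ 2 - η ^ 2)| := by ring_nf
    _ ≤ 8 * t ^ 2 + 4 * t * r := (abs_add_le _ _).trans (add_le_add htaylor hfreq)
    _ = _ := add_comm _ _

end Symbol

section Block

variable {ϑ : ℝ → ℝ} {f : ℝ → ℂ} {t : ℝ} {n : ℕ}

lemma lpCutoff1_eq_one (hϑone : ∀ ξ : ℝ, |ξ| ≤ 3 / 4 → ϑ ξ = 1)
    (hϑzero : ∀ ξ : ℝ, 4 / 3 ≤ |ξ| → ϑ ξ = 0) {ξ : ℝ} (hξ : |ξ| ∈ Icc (4 / 3) (3 / 2)) :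
    lpCutoff1 ϑ ξ = 1 := by
  have hhalf : |ξ / 2| ≤ 3 / 4 := by rw [abs_div, abs_two]; linarith [hξ.2]
  rw [lpCutoff1, hϑone _ hhalf, hϑzero ξ hξ.1, sub_zero]

lemma lpBlock1_const_mul (ϑ : ℝ → ℝ) (n : ℤ) (c : ℂ) (f : ℝ → ℂ) (x : ℝ) :
    lpBlock1 ϑ n (fun y => c * f y) x = c * lpBlock1 ϑ n f x := by
  simp only [lpBlock1, fourierT1_const_mul, mul_left_comm _ c, invFourierT1_const_mul]

/-- The block `Δ_n (e^{ε_n t ∂²ₓₓ} f - f)` of the displacement of `f` under the heat flow of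
viscosity `ε_n = 2⁻²ⁿ` up to time `t`. -/
noncomputable def heatBlock (ϑ : ℝ → ℝ) (n : ℕ) (t : ℝ) (f : ℝ → ℂ) : ℝ → ℂ :=
  lpBlock1 ϑ n fun x => heatSemigroup1 ((2 : ℝ) ^ (-(2 * (n : ℤ))) * t) f x - f x

lemma heatBlock_const_mul (ϑ : ℝ → ℝ) (n : ℕ) (t : ℝ) (c : ℂ) (f : ℝ → ℂ) :
    heatBlock ϑ n t (fun x => c * f x) = c • heatBlock ϑ n t f := by
  funext x
  simp only [heatBlock, heatSemigroup1_const_mul, ← mul_sub, lpBlock1_const_mul, Pi.smul_apply,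
    smul_eq_mul]

lemma heatBlock_eq_invFourierT1 (ht : 0 < t) (hf : Integrable f)
    (hcut : ∀ ξ, fourierT1 f ξ ≠ 0 → lpCutoff1 ϑ ((2 : ℝ) ^ (-(n : ℤ)) * ξ) = 1) :
    heatBlock ϑ n t f = invFourierT1 fun ξ =>
      ((Real.exp (-((2 : ℝ) ^ (-(2 * (n : ℤ))) * t * ξ ^ 2)) - 1 : ℝ) : ℂ) * fourierT1 f ξ := by
  have hτ : 0 < (2 : ℝ) ^ (-(2 * (n : ℤ))) * t := by positivity
  unfold heatBlock lpBlock1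
  congr! 2 with ξ
  rw [if_neg (by lia), fourierT1_sub (integrable_heatSemigroup1 hτ hf) hf,
    fourierT1_heatSemigroup1 hτ hf]
  by_cases hξ : fourierT1 f ξ = 0
  · simp [hξ]
  · rw [hcut ξ hξ]
    push_cast
    ring

lemma continuous_heatBlock (ht : 0 < t) (hf : Integrable f) (hfhat : Integrable (fourierT1 f))
    (hcut : ∀ ξ, fourierT1 f ξ ≠ 0 → lpCutoff1 ϑ ((2 : ℝ) ^ (-(n : ℤ)) * ξ) = 1) :
    Continuous (heatBlock ϑ n t f) := by
  rw [heatBlock_eq_invFourierT1 ht hf hcut]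
  exact continuous_invFourierT1 (integrable_exp_neg_sub_one_mul (by positivity) hfhat)

lemma norm_heatBlock_add_le {κ r : ℝ} (ht : 0 < t) (hcont : Continuous f) (hf : Integrable f)
    (hfhat : Integrable (fourierT1 f))
    (hcut : ∀ ξ, fourierT1 f ξ ≠ 0 → lpCutoff1 ϑ ((2 : ℝ) ^ (-(n : ℤ)) * ξ) = 1) (hκ : |κ| ≤ 2)
    (hfreq : ∀ ξ, fourierT1 f ξ ≠ 0 → |(2 : ℝ) ^ (-(n : ℤ)) * ξ| ≤ 2 ∧
      |(|(2 : ℝ) ^ (-(n : ℤ)) * ξ| - |κ|)| ≤ r) (x : ℝ) :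
    ‖heatBlock ϑ n t f x + ((t * κ ^ 2 : ℝ) : ℂ) * f x‖ ≤
      (4 * t * r + 8 * t ^ 2) * wienerNorm f := by
  have hsymbol : ∀ ξ, fourierT1 f ξ ≠ 0 →
      ‖((Real.exp (-((2 : ℝ) ^ (-(2 * (n : ℤ))) * t * ξ ^ 2)) - 1 : ℝ) : ℂ) -
        ((-(t * κ ^ 2) : ℝ) : ℂ)‖ ≤ 4 * t * r + 8 * t ^ 2 := by
    intro ξ hξ
    have hrescale : (2 : ℝ) ^ (-(2 * (n : ℤ))) * t * ξ ^ 2 =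
        t * ((2 : ℝ) ^ (-(n : ℤ)) * ξ) ^ 2 := by
      rw [two_mul, neg_add, zpow_add₀ two_ne_zero]
      ring
    rw [← Complex.ofReal_sub, Complex.norm_real, Real.norm_eq_abs, sub_neg_eq_add, hrescale]
    exact abs_exp_neg_mul_sq_sub_one_add_le ht.le (hfreq ξ hξ).1 hκ (hfreq ξ hξ).2
  have happrox := norm_invFourierT1_mul_sub_le hcont hf hfhat
    (integrable_exp_neg_sub_one_mul (by positivity) hfhat) hsymbol x
  rwa [← heatBlock_eq_invFourierT1 ht hf hcut, Complex.ofReal_neg, neg_mul, sub_neg_eq_add]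
    at happrox

end Block

section WavePacket

variable {φ : ℝ → ℂ}

/-- The envelope `φ` modulated by the carrier frequency `l`. -/
noncomputable def wavePacket (φ : ℝ → ℂ) (l x : ℝ) : ℂ := φ x * Complex.cos (l * x)

lemma norm_wavePacket (φ : ℝ → ℂ) (l x : ℝ) :
    ‖wavePacket φ l x‖ = ‖φ x‖ * |Real.cos (l * x)| := by
  rw [wavePacket, norm_mul, ← Complex.ofReal_mul, ← Complex.ofReal_cos, Complex.norm_real,
    Real.norm_eq_abs]

lemma continuous_wavePacket (hφ : Continuous φ) (l : ℝ) : Continuous (wavePacket φ l) := by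
  unfold wavePacket
  fun_prop

lemma integrable_wavePacket (hφ : Integrable φ) (l : ℝ) : Integrable (wavePacket φ l) := by
  refine hφ.mul_bdd (c := 1) (by fun_prop) (.of_forall fun x => ?_)
  rw [← Complex.ofReal_mul, ← Complex.ofReal_cos, Complex.norm_real]
  exact Real.abs_cos_le_one _

lemma fourierT1_wavePacket (hφ : Integrable φ) (l ξ : ℝ) :
    fourierT1 (wavePacket φ l) ξ = 1 / 2 * (fourierT1 φ (ξ - l) + fourierT1 φ (ξ + l)) := by
  unfold fourierT1 wavePacket
  rw [← integral_add (integrable_exp_mul hφ _) (integrable_exp_mul hφ _), ← integral_const_mul]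
  refine integral_congr_ae (.of_forall fun x => ?_)
  have hshift : ∀ σ : ℝ, Complex.exp (-Complex.I * (x * ((ξ - σ : ℝ) : ℂ))) =
      Complex.exp (-Complex.I * (x * ξ)) * Complex.exp (σ * x * Complex.I) := by
    intro σ
    rw [← Complex.exp_add]
    push_cast
    ring_nf
  have hminus := hshift l
  have hplus := hshift (-l)
  rw [sub_neg_eq_add, Complex.ofReal_neg, neg_mul (l : ℂ)] at hplus
  beta_reduce
  rw [hminus, hplus, Complex.cos]
  ring

lemma integrable_fourierT1_wavePacket (hφ : Integrable φ) (hφhat : Integrable (fourierT1 φ))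
    (l : ℝ) : Integrable (fourierT1 (wavePacket φ l)) := by
  rw [funext (fourierT1_wavePacket hφ l)]
  exact ((hφhat.comp_sub_right l).add (hφhat.comp_add_right l)).const_mul _

lemma wienerNorm_wavePacket_le (hφ : Integrable φ) (hφhat : Integrable (fourierT1 φ)) (l : ℝ) :
    wienerNorm (wavePacket φ l) ≤ wienerNorm φ := by
  have hminus := (hφhat.comp_sub_right l).norm
  have hplus := (hφhat.comp_add_right l).norm
  unfold wienerNorm
  refine mul_le_mul_of_nonneg_left ?_ (by positivity)
  calc ∫ ξ, ‖fourierT1 (wavePacket φ l) ξ‖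
      ≤ ∫ ξ, 1 / 2 * (‖fourierT1 φ (ξ - l)‖ + ‖fourierT1 φ (ξ + l)‖) := by
        refine integral_mono (integrable_fourierT1_wavePacket hφ hφhat l).norm
          ((hminus.add hplus).const_mul _) fun ξ => ?_
        simp only [fourierT1_wavePacket hφ, norm_mul, norm_div, norm_one, Complex.norm_ofNat]
        gcongr
        exact norm_add_le _ _
    _ = ∫ ξ, ‖fourierT1 φ ξ‖ := by
        rw [integral_const_mul, integral_add hminus hplus,
          integral_sub_right_eq_self (fun ξ => ‖fourierT1 φ ξ‖) l,
          integral_add_right_eq_self (fun ξ => ‖fourierT1 φ ξ‖) l]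
        ring

lemma abs_abs_sub_le_of_fourierT1_wavePacket_ne_zero {R l ξ : ℝ} (hφ : Integrable φ)
    (hband : ∀ ζ : ℝ, R ≤ |ζ| → fourierT1 φ ζ = 0)
    (hξ : fourierT1 (wavePacket φ l) ξ ≠ 0) : |(|ξ| - |l|)| ≤ R := by
  by_contra! hfar
  have hminus : R ≤ |ξ - l| := hfar.le.trans (abs_abs_sub_abs_le ξ l)
  have hplus : R ≤ |ξ + l| := by
    have hreverse := abs_abs_sub_abs_le ξ (-l)
    rw [abs_neg, sub_neg_eq_add] at hreverse
    exact hfar.le.trans hreverse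
  exact hξ (by rw [fourierT1_wavePacket hφ, hband _ hminus, hband _ hplus, add_zero, mul_zero])

end WavePacket

section LowerBound

lemma ofReal_setIntegral_le_eLpNorm {α E : Type*} [MeasurableSpace α] {μ : Measure α}
    [NormedAddCommGroup E] {S : Set α} {k : α → ℝ} {f : α → E} {p : ENNReal} (hS : μ S ≤ 1)
    (hk : IntegrableOn k S μ) (hkf : ∀ x, k x ≤ ‖f x‖) (hf : AEStronglyMeasurable f μ)
    (hp : 1 ≤ p) : ENNReal.ofReal (∫ x in S, k x ∂μ) ≤ eLpNorm f p μ := by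
  have hpos : ENNReal.ofReal (∫ x in S, k x ∂μ) ≤ ∫⁻ x in S, ENNReal.ofReal (k x) ∂μ := by
    rw [integral_eq_lintegral_pos_part_sub_lintegral_neg_part hk]
    exact (ENNReal.ofReal_le_ofReal (sub_le_self _ ENNReal.toReal_nonneg)).trans
      ENNReal.ofReal_toReal_le
  have hexponent : 0 ≤ 1 / (1 : ENNReal).toReal - 1 / p.toReal := by
    rcases eq_or_ne p ⊤ with rfl | hptop
    · simp
    · have hp' : 1 ≤ p.toReal := by simpa using ENNReal.toReal_mono hptop hp
      rw [ENNReal.toReal_one, div_one, sub_nonneg]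
      exact div_le_one_of_le₀ hp' (by positivity)
  calc ENNReal.ofReal (∫ x in S, k x ∂μ) ≤ ∫⁻ x in S, ENNReal.ofReal (k x) ∂μ := hpos
    _ ≤ ∫⁻ x in S, ‖f x‖ₑ ∂μ := by
        refine lintegral_mono fun x => ?_
        rw [← ofReal_norm]
        exact ENNReal.ofReal_le_ofReal (hkf x)
    _ = eLpNorm f 1 (μ.restrict S) := eLpNorm_one_eq_lintegral_enorm.symm
    _ ≤ eLpNorm f p (μ.restrict S) *
          μ.restrict S univ ^ (1 / (1 : ENNReal).toReal - 1 / p.toReal) :=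
        eLpNorm_le_eLpNorm_mul_rpow_measure_univ hp hf.restrict
    _ ≤ eLpNorm f p (μ.restrict S) * 1 := by
        gcongr
        rw [Measure.restrict_apply_univ]
        exact ENNReal.rpow_le_one hS hexponent
    _ ≤ eLpNorm f p μ := by
        rw [mul_one]
        exact eLpNorm_mono_measure f Measure.restrict_le_self

lemma tendsto_integral_mul_cos_sq {f : ℝ → ℝ} (hf : Integrable f) :
    Tendsto (fun l : ℝ => ∫ x, f x * Real.cos (l * x) ^ 2) atTop (𝓝 ((∫ x, f x) / 2)) := by
  have hre : ∀ l : ℝ, (fourierT1 (fun x => (f x : ℂ)) (2 * l)).re =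
      ∫ x, f x * Real.cos (2 * (l * x)) := by
    intro l
    have hfc : Integrable fun x => (f x : ℂ) := hf.ofReal
    refine (integral_re (integrable_exp_mul hfc _)).symm.trans ?_
    refine integral_congr_ae (.of_forall fun x => ?_)
    have hphase : -Complex.I * (x * ((2 * l : ℝ) : ℂ)) =
        ((-(2 * (l * x)) : ℝ) : ℂ) * Complex.I := by
      push_cast
      ring
    beta_reduce
    rw [hphase, RCLike.re_to_complex, Complex.re_mul_ofReal, Complex.exp_ofReal_mul_I_re,
      Real.cos_neg, mul_comm]
  have hcos : ∀ l : ℝ, Integrable fun x => f x * Real.cos (2 * (l * x)) := fun l =>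
    hf.mul_bdd (c := 1) (by fun_prop) (.of_forall fun x => Real.abs_cos_le_one _)
  have hsplit : ∀ l : ℝ, ∫ x, f x * Real.cos (l * x) ^ 2 =
      (∫ x, f x) / 2 + (fourierT1 (fun x => (f x : ℂ)) (2 * l)).re / 2 := by
    intro l
    rw [hre, ← integral_div, ← integral_div, ← integral_add (hf.div_const 2) ((hcos l).div_const 2)]
    refine integral_congr_ae (.of_forall fun x => ?_)
    simp only [Real.cos_sq]
    ring
  have hosc : Tendsto (fun l : ℝ => (fourierT1 (fun x => (f x : ℂ)) (2 * l)).re) atTop (𝓝 0) :=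
    (Complex.continuous_re.tendsto 0).comp
      ((tendsto_fourierT1_atTop _).comp (tendsto_id.const_mul_atTop two_pos))
  simpa only [hsplit, zero_div, add_zero] using (hosc.div_const 2).const_add ((∫ x, f x) / 2)

lemma tendsto_setIntegral_mul_cos_sq {f : ℝ → ℝ} {S : Set ℝ} (hS : MeasurableSet S)
    (hf : IntegrableOn f S) :
    Tendsto (fun l : ℝ => ∫ x in S, f x * Real.cos (l * x) ^ 2) atTop
      (𝓝 ((∫ x in S, f x) / 2)) := by
  have hrestrict : ∀ l : ℝ, ∫ x in S, f x * Real.cos (l * x) ^ 2 =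
      ∫ x, S.indicator f x * Real.cos (l * x) ^ 2 := by
    intro l
    rw [← integral_indicator hS]
    exact congrArg _ (funext fun x => indicator_mul_left S f fun x => Real.cos (l * x) ^ 2)
  simpa only [hrestrict, ← integral_indicator hS] using
    tendsto_integral_mul_cos_sq (hf.integrable_indicator hS)

lemma tendsto_setIntegral_mul_cos_sq_two_pow {f : ℝ → ℝ} {S : Set ℝ} {κ : ℝ} (hκ : 0 < κ)
    (hS : MeasurableSet S) (hf : IntegrableOn f S) :
    Tendsto (fun n : ℕ => ∫ x in S, f x * Real.cos (κ * 2 ^ n * x) ^ 2) atTop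
      (𝓝 ((∫ x in S, f x) / 2)) :=
  (tendsto_setIntegral_mul_cos_sq hS hf).comp
    ((tendsto_pow_atTop_atTop_of_one_lt one_lt_two).const_mul_atTop hκ)

lemma setIntegral_norm_pos {X E : Type*} [TopologicalSpace X] [MeasurableSpace X]
    [OpensMeasurableSpace X] [NormedAddCommGroup E] {μ : Measure X} [μ.IsOpenPosMeasure]
    {U : Set X} {f : X → E} {x : X} (hU : IsOpen U) (hf : Continuous f) (hint : IntegrableOn f U μ)
    (hxU : x ∈ U) (hx : f x ≠ 0) : 0 < ∫ y in U, ‖f y‖ ∂μ := by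
  rw [setIntegral_pos_iff_support_of_nonneg_ae (.of_forall fun y => norm_nonneg (f y)) hint.norm]
  have hopen : IsOpen (Function.support (fun y => ‖f y‖) ∩ U) :=
    hf.norm.isOpen_support.inter hU
  exact hopen.measure_pos μ ⟨x, norm_ne_zero_iff.2 hx, hxU⟩

end LowerBound

section ToyModel

variable {ϑ : ℝ → ℝ} {φ : ℝ → ℂ} {R κ t : ℝ} {n : ℕ} {p : ENNReal} {S : Set ℝ}

lemma abs_abs_two_zpow_neg_mul_sub_le (hφ : Integrable φ)
    (hband : ∀ ζ : ℝ, R ≤ |ζ| → fourierT1 φ ζ = 0) {ξ : ℝ}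
    (hξ : fourierT1 (wavePacket φ (κ * 2 ^ n)) ξ ≠ 0) :
    |(|(2 : ℝ) ^ (-(n : ℤ)) * ξ| - |κ|)| ≤ R * (1 / 2) ^ n := by
  have hpow : (0 : ℝ) < 2 ^ n := by positivity
  have hrescale : |(2 : ℝ) ^ (-(n : ℤ)) * ξ| - |κ| = (|ξ| - |κ * 2 ^ n|) * (1 / 2) ^ n := by
    rw [zpow_neg, zpow_natCast, abs_mul, abs_mul, abs_inv, abs_of_pos hpow, one_div, inv_pow]
    field_simp
  rw [hrescale, abs_mul, abs_of_pos (by positivity : (0 : ℝ) < (1 / 2) ^ n)]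
  gcongr
  exact abs_abs_sub_le_of_fourierT1_wavePacket_ne_zero hφ hband hξ

lemma norm_mul_cos_sq_le_norm_wavePacket (φ : ℝ → ℂ) (l x : ℝ) :
    ‖φ x‖ * Real.cos (l * x) ^ 2 ≤ ‖wavePacket φ l x‖ := by
  rw [norm_wavePacket, ← sq_abs]
  gcongr
  exact pow_le_of_le_one (abs_nonneg _) (Real.abs_cos_le_one _) two_ne_zero

lemma abs_two_zpow_neg_mul_mem_Icc (hφ : Integrable φ)
    (hband : ∀ ζ : ℝ, R ≤ |ζ| → fourierT1 φ ζ = 0) (hκ : 0 ≤ κ)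
    (hlow : 4 / 3 ≤ κ - R * (1 / 2) ^ n) (hhigh : κ + R * (1 / 2) ^ n ≤ 3 / 2) {ξ : ℝ}
    (hξ : fourierT1 (wavePacket φ (κ * 2 ^ n)) ξ ≠ 0) :
    |(2 : ℝ) ^ (-(n : ℤ)) * ξ| ∈ Icc (4 / 3) (3 / 2) := by
  have hdist := abs_abs_two_zpow_neg_mul_sub_le hφ hband hξ
  rw [abs_of_nonneg hκ, abs_le] at hdist
  constructor <;> linarith [hdist.1, hdist.2]

lemma mul_cos_sq_sub_le_norm_heatBlock_wavePacket (hϑone : ∀ ξ : ℝ, |ξ| ≤ 3 / 4 → ϑ ξ = 1)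
    (hϑzero : ∀ ξ : ℝ, 4 / 3 ≤ |ξ| → ϑ ξ = 0) (hcont : Continuous φ) (hφ : Integrable φ)
    (hφhat : Integrable (fourierT1 φ)) (hband : ∀ ζ : ℝ, R ≤ |ζ| → fourierT1 φ ζ = 0)
    (hR : 0 ≤ R) (hlow : 4 / 3 ≤ κ - R * (1 / 2) ^ n) (hhigh : κ + R * (1 / 2) ^ n ≤ 3 / 2)
    (ht : 0 < t) (x : ℝ) :
    t * κ ^ 2 * (‖φ x‖ * Real.cos (κ * 2 ^ n * x) ^ 2) -
        (4 * t * (R * (1 / 2) ^ n) + 8 * t ^ 2) * wienerNorm φ ≤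
      ‖heatBlock ϑ n t (wavePacket φ (κ * 2 ^ n)) x‖ := by
  have hr : 0 ≤ R * (1 / 2) ^ n := by positivity
  have hκ : 0 ≤ κ := by linarith
  set w := wavePacket φ (κ * 2 ^ n)
  have hshell : ∀ ξ, fourierT1 w ξ ≠ 0 → |(2 : ℝ) ^ (-(n : ℤ)) * ξ| ∈ Icc (4 / 3) (3 / 2) :=
    fun ξ => abs_two_zpow_neg_mul_mem_Icc hφ hband hκ hlow hhigh
  have hmain : t * κ ^ 2 * (‖φ x‖ * Real.cos (κ * 2 ^ n * x) ^ 2) ≤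
      ‖((t * κ ^ 2 : ℝ) : ℂ) * w x‖ := by
    rw [norm_mul, Complex.norm_real, Real.norm_of_nonneg (by positivity)]
    gcongr
    exact norm_mul_cos_sq_le_norm_wavePacket φ _ x
  have herror : ‖heatBlock ϑ n t w x + ((t * κ ^ 2 : ℝ) : ℂ) * w x‖ ≤
      (4 * t * (R * (1 / 2) ^ n) + 8 * t ^ 2) * wienerNorm φ :=
    calc _ ≤ (4 * t * (R * (1 / 2) ^ n) + 8 * t ^ 2) * wienerNorm w :=
          norm_heatBlock_add_le ht (continuous_wavePacket hcont _) (integrable_wavePacket hφ _)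
            (integrable_fourierT1_wavePacket hφ hφhat _)
            (fun ξ hξ => lpCutoff1_eq_one hϑone hϑzero (hshell ξ hξ))
            (by rw [abs_of_nonneg hκ]; linarith)
            (fun ξ hξ => ⟨(hshell ξ hξ).2.trans (by norm_num),
              abs_abs_two_zpow_neg_mul_sub_le hφ hband hξ⟩) x
      _ ≤ _ := mul_le_mul_of_nonneg_left (wienerNorm_wavePacket_le hφ hφhat _) (by positivity)
  linarith [norm_le_add_norm_add' (heatBlock ϑ n t w x) (((t * κ ^ 2 : ℝ) : ℂ) * w x)]

lemma ofReal_le_eLpNorm_heatBlock_wavePacket (hϑone : ∀ ξ : ℝ, |ξ| ≤ 3 / 4 → ϑ ξ = 1)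
    (hϑzero : ∀ ξ : ℝ, 4 / 3 ≤ |ξ| → ϑ ξ = 0) (hcont : Continuous φ) (hφ : Integrable φ)
    (hφhat : Integrable (fourierT1 φ)) (hband : ∀ ζ : ℝ, R ≤ |ζ| → fourierT1 φ ζ = 0)
    (hR : 0 ≤ R) (hlow : 4 / 3 ≤ κ - R * (1 / 2) ^ n) (hhigh : κ + R * (1 / 2) ^ n ≤ 3 / 2)
    (ht : 0 < t) (hp : 1 ≤ p) (hS : volume S = 1) :
    ENNReal.ofReal (t * κ ^ 2 * (∫ x in S, ‖φ x‖ * Real.cos (κ * 2 ^ n * x) ^ 2) -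
        (4 * t * (R * (1 / 2) ^ n) + 8 * t ^ 2) * wienerNorm φ) ≤
      eLpNorm (heatBlock ϑ n t (wavePacket φ (κ * 2 ^ n))) p volume := by
  set E := (4 * t * (R * (1 / 2) ^ n) + 8 * t ^ 2) * wienerNorm φ
  have hr : 0 ≤ R * (1 / 2) ^ n := by positivity
  have hblock : Continuous (heatBlock ϑ n t (wavePacket φ (κ * 2 ^ n))) :=
    continuous_heatBlock ht (integrable_wavePacket hφ _)
      (integrable_fourierT1_wavePacket hφ hφhat _) fun ξ hξ => lpCutoff1_eq_one hϑone hϑzero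
        (abs_two_zpow_neg_mul_mem_Icc hφ hband (by linarith) hlow hhigh hξ)
  have hmass : IntegrableOn (fun x => ‖φ x‖ * Real.cos (κ * 2 ^ n * x) ^ 2) S := by
    refine (hφ.norm.mul_bdd (c := 1) (by fun_prop) (.of_forall fun x => ?_)).integrableOn
    rw [norm_pow]
    exact pow_le_one₀ (norm_nonneg _) (Real.abs_cos_le_one _)
  have hconst : IntegrableOn (fun _ => E) S := integrableOn_const (by simp [hS])
  have hintegral : ∫ x in S, (t * κ ^ 2 * (‖φ x‖ * Real.cos (κ * 2 ^ n * x) ^ 2) - E) =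
      t * κ ^ 2 * (∫ x in S, ‖φ x‖ * Real.cos (κ * 2 ^ n * x) ^ 2) - E := by
    rw [integral_sub (hmass.const_mul _) hconst, integral_const_mul, setIntegral_const,
      measureReal_def, hS, ENNReal.toReal_one, one_smul]
  rw [← hintegral]
  exact ofReal_setIntegral_le_eLpNorm hS.le ((hmass.const_mul _).sub hconst)
    (mul_cos_sq_sub_le_norm_heatBlock_wavePacket hϑone hϑzero hcont hφ hφhat hband hR hlow hhigh ht)
    hblock.aestronglyMeasurable hp

/-- The initial datum `u₀(x) = 2⁻ⁿˢ φ(x) cos(κ 2ⁿ x)`. -/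
noncomputable def toyDatum (φ : ℝ → ℂ) (κ s : ℝ) (n : ℕ) (x : ℝ) : ℂ :=
  (((2 : ℝ) ^ (-(n : ℝ) * s) : ℝ) : ℂ) * φ x * Complex.cos ((κ * 2 ^ n : ℝ) * x)

/-- The contribution `2ⁿˢ ‖Δ_n (u(t) - u₀)‖_{L^p}` of frequency `2ⁿ` to the `B^s_{p,∞}` seminorm. -/
noncomputable def toyBlockNorm (ϑ : ℝ → ℝ) (φ : ℝ → ℂ) (κ s : ℝ) (p : ENNReal) (n : ℕ) (t : ℝ) :
    ENNReal :=
  ENNReal.ofReal ((2 : ℝ) ^ ((n : ℝ) * s)) * eLpNorm (heatBlock ϑ n t (toyDatum φ κ s n)) p volume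

lemma toyBlockNorm_eq_eLpNorm (ϑ : ℝ → ℝ) (φ : ℝ → ℂ) (κ s : ℝ) (p : ENNReal) (n : ℕ) (t : ℝ) :
    toyBlockNorm ϑ φ κ s p n t = eLpNorm (heatBlock ϑ n t (wavePacket φ (κ * 2 ^ n))) p volume := by
  have hdatum : toyDatum φ κ s n =
      fun x => (((2 : ℝ) ^ (-(n : ℝ) * s) : ℝ) : ℂ) * wavePacket φ (κ * 2 ^ n) x :=
    funext fun x => mul_assoc _ _ _
  have hscale : (2 : ℝ) ^ ((n : ℝ) * s) * (2 : ℝ) ^ (-(n : ℝ) * s) = 1 := by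
    rw [← Real.rpow_add two_pos, neg_mul, add_neg_cancel, Real.rpow_zero]
  rw [toyBlockNorm, hdatum, heatBlock_const_mul, eLpNorm_const_smul, ← mul_assoc, ← ofReal_norm,
    Complex.norm_real, Real.norm_of_nonneg (by positivity), ← ENNReal.ofReal_mul (by positivity),
    hscale, ENNReal.ofReal_one, one_mul]

lemma exists_ofReal_le_toyBlockNorm (hϑone : ∀ ξ : ℝ, |ξ| ≤ 3 / 4 → ϑ ξ = 1)
    (hϑzero : ∀ ξ : ℝ, 4 / 3 ≤ |ξ| → ϑ ξ = 0) (hcont : Continuous φ) (hφ : Integrable φ)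
    (hne : φ ≠ 0) (hband : HasCompactSupport (fourierT1 φ)) (hκ : κ ∈ Ioo (4 / 3) (3 / 2))
    (s : ℝ) (hp : 1 ≤ p) :
    ∃ c₁ C₁ : ℝ, 0 < c₁ ∧ 0 < C₁ ∧ ∃ N : ℕ, ∀ n : ℕ, N ≤ n → ∀ t : ℝ, 0 < t →
      ENNReal.ofReal (c₁ * t - C₁ * t ^ 2) ≤ toyBlockNorm ϑ φ κ s p n t := by
  have hφhat : Integrable (fourierT1 φ) :=
    (continuous_fourierT1 hφ).integrable_of_hasCompactSupport hband
  obtain ⟨R, hR, hφhat_zero⟩ := hband.exists_pos_le_norm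
  obtain ⟨x₀, hx₀⟩ := Function.ne_iff.1 hne
  have hM : 0 < wienerNorm φ := (norm_pos_iff.2 hx₀).trans_le (norm_le_wienerNorm hcont hφ hφhat x₀)
  have hball : volume (Metric.ball x₀ (1 / 2)) = 1 := by norm_num [Real.volume_ball]
  set m := ∫ x in Metric.ball x₀ (1 / 2), ‖φ x‖
  have hm : 0 < m := setIntegral_norm_pos Metric.isOpen_ball hcont hφ.integrableOn
    (Metric.mem_ball_self one_half_pos) hx₀
  have hκpos : 0 < κ := by linarith [hκ.1]
  have hmass := tendsto_setIntegral_mul_cos_sq_two_pow hκpos Metric.isOpen_ball.measurableSet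
    (hφ.norm.integrableOn (s := Metric.ball x₀ (1 / 2)))
  have hr : Tendsto (fun n : ℕ => R * (1 / 2 : ℝ) ^ n) atTop (𝓝 0) := by
    simpa using (tendsto_pow_atTop_nhds_zero_of_lt_one one_half_pos.le one_half_lt_one).const_mul R
  have hcoeff := (hmass.const_mul (κ ^ 2)).sub ((hr.const_mul 4).mul_const (wienerNorm φ))
  have hgap : κ ^ 2 * m / 4 < κ ^ 2 * (m / 2) - 4 * 0 * wienerNorm φ := by
    linarith [show 0 < κ ^ 2 * m by positivity]
  refine ⟨κ ^ 2 * m / 4, 8 * wienerNorm φ, by positivity, by positivity, eventually_atTop.1 ?_⟩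
  filter_upwards [hcoeff.eventually_const_lt hgap,
    (hr.const_sub κ).eventually_const_le (by simpa using hκ.1),
    (hr.const_add κ).eventually_le_const (by simpa using hκ.2)] with n hn hlow hhigh t ht
  rw [toyBlockNorm_eq_eLpNorm]
  refine (ENNReal.ofReal_le_ofReal ?_).trans (ofReal_le_eLpNorm_heatBlock_wavePacket hϑone hϑzero
    hcont hφ hφhat hφhat_zero hR.le hlow hhigh ht hp hball)
  linear_combination t * hn

theorem toy_model_heat_nonconvergence_general (hϑone : ∀ ξ : ℝ, |ξ| ≤ 3 / 4 → ϑ ξ = 1)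
    (hϑzero : ∀ ξ : ℝ, 4 / 3 ≤ |ξ| → ϑ ξ = 0) (hcont : Continuous φ) (hφ : Integrable φ)
    (hne : φ ≠ 0) (hband : HasCompactSupport (fourierT1 φ)) (hκ : κ ∈ Ioo (4 / 3) (3 / 2))
    (s : ℝ) (hp : 1 ≤ p) :
    ∃ c₁ C₁ : ℝ, 0 < c₁ ∧ 0 < C₁ ∧
      (∃ N : ℕ, ∀ n : ℕ, N ≤ n → ∀ t : ℝ, 0 < t →
        ENNReal.ofReal (c₁ * t - C₁ * t ^ 2) ≤ toyBlockNorm ϑ φ κ s p n t) ∧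
      (∀ t : ℝ, 0 < t → 0 < c₁ * t - C₁ * t ^ 2 →
        ¬ Tendsto (fun n : ℕ => toyBlockNorm ϑ φ κ s p n t) atTop (𝓝 0)) := by
  obtain ⟨c₁, C₁, hc₁, hC₁, N, hlower⟩ :=
    exists_ofReal_le_toyBlockNorm hϑone hϑzero hcont hφ hne hband hκ s hp
  refine ⟨c₁, C₁, hc₁, hC₁, ⟨N, hlower⟩, fun t ht hpos hlim => ?_⟩
  have hzero : ENNReal.ofReal (c₁ * t - C₁ * t ^ 2) ≤ 0 :=
    ge_of_tendsto hlim (eventually_atTop.2 ⟨N, fun n hn => hlower n hn t ht⟩)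
  exact (ENNReal.ofReal_pos.2 hpos).not_ge hzero

end ToyModel

/-- 1-D toy model.  With viscosity `ε_n = 2^{-2n}` and initial data
`u₀(x) = 2^{-ns} φ(x) cos((17/12)2^n x)` (`φ` a Schwartz bump with `supp φ̂ ⊆ {|ξ| ≤ 1/2}`,
`φ̂ = 1` near `0`), the solution `u^{ε_n}(t) = e^{ε_n t ∂²ₓₓ}u₀` satisfies
`2^{ns}‖Δ_n(u^{ε_n}(t) − u₀)‖_{L^p} ≥ c₁ t − C₁ t²` with `c₁, C₁` independent of `n`;
hence `u^{ε_n}(t) − u₀` does not converge to `0` in `B^s_{p,∞}(ℝ)` as `n → ∞` for fixed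
small `t` with `c₁t − C₁t² > 0`. -/
theorem toy_model_heat_nonconvergence
    (ϑ : ℝ → ℝ) (hϑsmooth : ContDiff ℝ (⊤ : ℕ∞) ϑ)
    (hϑeven : ∀ ξ, ϑ (-ξ) = ϑ ξ)
    (hϑone : ∀ ξ : ℝ, |ξ| ≤ 3/4 → ϑ ξ = 1)
    (hϑzero : ∀ ξ : ℝ, 4/3 ≤ |ξ| → ϑ ξ = 0)
    (φhat : ℝ → ℝ) (hsmooth : ContDiff ℝ (⊤ : ℕ∞) φhat) (hcs : HasCompactSupport φhat)
    (hsupp : ∀ ξ : ℝ, 1/2 ≤ |ξ| → φhat ξ = 0)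
    (hone : ∃ ρ : ℝ, 0 < ρ ∧ ∀ ξ : ℝ, |ξ| ≤ ρ → φhat ξ = 1)
    (φ : ℝ → ℂ) (hφcont : Continuous φ) (hφint : Integrable φ)
    (hφ : ∀ ξ : ℝ, fourierT1 φ ξ = (φhat ξ : ℂ))
    (s : ℝ) (p : ENNReal) (hp : 1 ≤ p)
    (u₀ : ℕ → ℝ → ℂ)
    (hu₀ : u₀ = fun (n : ℕ) (x : ℝ) => ((((2:ℝ)^(-(n:ℝ)*s) : ℝ)) : ℂ) * φ x *
      Complex.cos ((((17:ℝ)/12) * 2^n : ℝ) * x))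
    (u : ℕ → ℝ → ℝ → ℂ)
    (hu : u = fun (n : ℕ) (t : ℝ) => heatSemigroup1 ((2:ℝ)^(-(2*(n:ℤ))) * t) (u₀ n)) :
    ∃ c₁ C₁ : ℝ, 0 < c₁ ∧ 0 < C₁ ∧
      (∃ N : ℕ, ∀ n : ℕ, N ≤ n → ∀ t : ℝ, 0 < t →
        ENNReal.ofReal (c₁ * t - C₁ * t^2) ≤
          ENNReal.ofReal ((2:ℝ)^((n:ℝ)*s)) *
            eLpNorm (lpBlock1 ϑ (n:ℤ) (fun x => u n t x - u₀ n x)) p volume) ∧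
      (∀ t : ℝ, 0 < t → 0 < c₁ * t - C₁ * t^2 →
        ¬ Tendsto (fun n : ℕ =>
            ENNReal.ofReal ((2:ℝ)^((n:ℝ)*s)) *
              eLpNorm (lpBlock1 ϑ (n:ℤ) (fun x => u n t x - u₀ n x)) p volume)
          atTop (nhds 0)) := by
  subst hu₀ hu
  have hφhat : fourierT1 φ = Complex.ofReal ∘ φhat := funext hφ
  have hband : HasCompactSupport (fourierT1 φ) := hφhat ▸ hcs.comp_left Complex.ofReal_zero
  have hφne : φ ≠ 0 := by
    rintro rfl
    obtain ⟨ρ, hρ, hφhat_one⟩ := hone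
    simpa [fourierT1, hφhat_one 0 (by simpa using hρ.le)] using hφ 0
  exact toy_model_heat_nonconvergence_general hϑone hϑzero hφcont hφint hφne hband
    (by norm_num) s hp
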